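/- arXiv:2308.07987 — 2 statements merged into one kernel-verified Lean document; each statement's English description precedes it below -/
import Mathlib

section
/- Let A ∈ ℝ^{m×n} have unit-norm rows a_1,…,a_m, let x, x_k ∈ ℝ^n, b = Ax, and let b̂ = b + c where c is supported on C ⊆ {1,…,m} with |C| ≤ βm. Fix q ∈ (0,1), α ∈ (0,1] with α(1−q) > β. Let S ⊆ C be nonempty with every i ∈ S satisfying |⟨a_i, x_k⟩ − b̂_i| ≤ σ_max(A)/√(m[α(1−q) − β]) · ‖x_k − x‖, and for i ∈ S set v_i = (b̂_i − ⟨a_i, x_k⟩) a_i. Then the average cross term satisfies (2/|S|) Σ_{i ∈ S} ⟨x_k − x, v_i⟩ ≤ (2/√|S|)·σ_max(A)²/√(m[α(1−q) − β]) · ‖x_k − x‖². -/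
open Finset

/-- The largest singular value of `A`, i.e. `sup_{‖x‖ = 1} ‖A x‖` (Euclidean norms). -/
noncomputable def sigmaMax {m n : ℕ} (A : Matrix (Fin m) (Fin n) ℝ) : ℝ :=
  sSup {r : ℝ | ∃ x : Fin n → ℝ, (∑ j, (x j) ^ 2) = 1 ∧
    r = Real.sqrt (∑ i, (∑ j, A i j * x j) ^ 2)}

/-!
Since `⟨x_k - x, v_i⟩ = r_i ⟨a_i, x_k - x⟩` with `r_i = b̂_i - ⟨a_i, x_k⟩`, the sum of the cross
terms pairs the residuals with the entries of `A (x_k - x)` over `S`. By Cauchy–Schwarz it is at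
most `√(∑_{i ∈ S} r_i²) ‖A (x_k - x)‖`. Residuals bounded by `τ` on `S` make the first factor at
most `√|S| τ`, and the second is at most `σ_max(A) ‖x_k - x‖`.
-/

theorem sqrt_sum_sq_le_sqrt_card_mul {ι : Type*} {S : Finset ι} {r : ι → ℝ} {τ : ℝ}
    (hτ : 0 ≤ τ) (hr : ∀ i ∈ S, |r i| ≤ τ) :
    √(∑ i ∈ S, r i ^ 2) ≤ √(#S : ℝ) * τ := by
  have hsum : ∑ i ∈ S, r i ^ 2 ≤ #S * τ ^ 2 := by
    simpa only [nsmul_eq_mul] using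
      sum_le_card_nsmul S (r · ^ 2) (τ ^ 2) fun i hi ↦ (abs_le.1 (hr i hi)).elim sq_le_sq'
  calc √(∑ i ∈ S, r i ^ 2) ≤ √(#S * τ ^ 2) := Real.sqrt_le_sqrt hsum
    _ = √(#S : ℝ) * τ := by rw [Real.sqrt_mul (Nat.cast_nonneg _), Real.sqrt_sq hτ]

section L2OpNorm

open scoped Matrix Matrix.Norms.L2Operator

theorem sigmaMax_eq_l2_opNorm {m n : ℕ} (A : Matrix (Fin m) (Fin n) ℝ) : sigmaMax A = ‖A‖ := by
  rw [Matrix.l2_opNorm_def, ← ContinuousLinearMap.sSup_sphere_eq_norm, sigmaMax]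
  congr 1
  ext r
  refine (WithLp.equiv 2 (Fin n → ℝ)).symm.exists_congr fun x ↦ ?_
  simp [EuclideanSpace.norm_eq, Matrix.toLpLin_apply, Matrix.mulVec, dotProduct, eq_comm (a := r)]

variable {ι κ : Type*} [Fintype ι] [Fintype κ] [DecidableEq κ]

theorem sum_mul_mulVec_le_l2_opNorm (A : Matrix ι κ ℝ) (r : ι → ℝ) (e : κ → ℝ) (S : Finset ι) :
    ∑ i ∈ S, r i * (A *ᵥ e) i ≤ √(∑ i ∈ S, r i ^ 2) * (‖A‖ * ‖WithLp.toLp 2 e‖) := by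
  calc ∑ i ∈ S, r i * (A *ᵥ e) i
      ≤ √(∑ i ∈ S, r i ^ 2) * √(∑ i ∈ S, (A *ᵥ e) i ^ 2) :=
        Real.sum_mul_le_sqrt_mul_sqrt S r (A *ᵥ e)
    _ ≤ √(∑ i ∈ S, r i ^ 2) * √(∑ i, (A *ᵥ e) i ^ 2) := by
        gcongr
        exact subset_univ S
    _ = √(∑ i ∈ S, r i ^ 2) * ‖WithLp.toLp 2 (A *ᵥ e)‖ := by simp [EuclideanSpace.norm_eq]
    _ ≤ √(∑ i ∈ S, r i ^ 2) * (‖A‖ * ‖WithLp.toLp 2 e‖) := by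
        gcongr
        exact A.l2_opNorm_mulVec (WithLp.toLp 2 e)

theorem cross_term_bound_general (A : Matrix ι κ ℝ) (x xk : κ → ℝ) (bhat : ι → ℝ)
    {S : Finset ι} (hS : S.Nonempty) {τ : ℝ} (hres : ∀ i ∈ S, |(A *ᵥ xk) i - bhat i| ≤ τ) :
    2 / (#S : ℝ) * ∑ i ∈ S, (xk - x) ⬝ᵥ ((bhat i - (A *ᵥ xk) i) • A.row i)
      ≤ 2 / √(#S : ℝ) * (τ * ‖A‖) * ‖WithLp.toLp 2 (xk - x)‖ := by
  have hτ : 0 ≤ τ := hS.elim fun i hi ↦ (abs_nonneg _).trans (hres i hi)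
  have hr : ∀ i ∈ S, |bhat i - (A *ᵥ xk) i| ≤ τ := fun i hi ↦
    (abs_sub_comm _ _).trans_le (hres i hi)
  have hcross : ∀ i, (xk - x) ⬝ᵥ ((bhat i - (A *ᵥ xk) i) • A.row i)
      = (bhat i - (A *ᵥ xk) i) * (A *ᵥ (xk - x)) i := fun i ↦ by
    rw [dotProduct_smul, dotProduct_comm, smul_eq_mul]
    rfl
  calc 2 / (#S : ℝ) * ∑ i ∈ S, (xk - x) ⬝ᵥ ((bhat i - (A *ᵥ xk) i) • A.row i)
      = 2 / (#S : ℝ) * ∑ i ∈ S, (bhat i - (A *ᵥ xk) i) * (A *ᵥ (xk - x)) i := by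
        simp only [hcross]
    _ ≤ 2 / (#S : ℝ) * (√(∑ i ∈ S, (bhat i - (A *ᵥ xk) i) ^ 2) *
          (‖A‖ * ‖WithLp.toLp 2 (xk - x)‖)) := by
        gcongr
        exact sum_mul_mulVec_le_l2_opNorm A (fun i ↦ bhat i - (A *ᵥ xk) i) (xk - x) S
    _ ≤ 2 / (#S : ℝ) * (√(#S : ℝ) * τ * (‖A‖ * ‖WithLp.toLp 2 (xk - x)‖)) := by
        gcongr
        exact sqrt_sum_sq_le_sqrt_card_mul hτ hr
    _ = 2 * (√(#S : ℝ) / #S) * (τ * ‖A‖) * ‖WithLp.toLp 2 (xk - x)‖ := by ring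
    _ = 2 / √(#S : ℝ) * (τ * ‖A‖) * ‖WithLp.toLp 2 (xk - x)‖ := by
        rw [Real.sqrt_div_self', mul_one_div]

end L2OpNorm

/-- **Cross-term bound.**  If `A` has unit-norm rows, `b = Ax`, `b̂ = b + c` with `c`
supported on `C`, `|C| ≤ βm`, `q ∈ (0,1)`, `α ∈ (0,1]` with `α(1-q) > β`, and `S ⊆ C` is
nonempty with every `i ∈ S` satisfying `|⟨a_i, x_k⟩ - b̂_i| ≤ σ_max(A)/√(m[α(1-q) - β])·‖x_k - x‖`,
then, with `v_i = (b̂_i - ⟨a_i, x_k⟩) a_i`, the average cross term satisfies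
`(2/|S|) Σ_{i ∈ S} ⟨x_k - x, v_i⟩ ≤ (2/√|S|)·σ_max(A)²/√(m[α(1-q) - β]) · ‖x_k - x‖²`. -/
theorem cross_term_bound {m n : ℕ}
    (A : Matrix (Fin m) (Fin n) ℝ) (hrows : ∀ i, ∑ j, (A i j) ^ 2 = 1)
    (x xk : Fin n → ℝ) (b c bhat : Fin m → ℝ)
    (hb : ∀ i, b i = ∑ j, A i j * x j)
    (hbhat : ∀ i, bhat i = b i + c i)
    (C : Finset (Fin m)) (hsupp : ∀ i, c i ≠ 0 → i ∈ C)
    (β : ℝ) (hC : (C.card : ℝ) ≤ β * (m : ℝ))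
    (q : ℝ) (hq0 : 0 < q) (hq1 : q < 1)
    (α : ℝ) (hα0 : 0 < α) (hα1 : α ≤ 1)
    (hαqβ : β < α * (1 - q))
    (S : Finset (Fin m)) (hSC : S ⊆ C) (hS : S.Nonempty)
    (hres : ∀ i ∈ S, |(∑ j, A i j * xk j) - bhat i|
      ≤ sigmaMax A / Real.sqrt ((m : ℝ) * (α * (1 - q) - β)) *
          Real.sqrt (∑ j, (xk j - x j) ^ 2)) :
    (2 / (S.card : ℝ)) *
        ∑ i ∈ S, ∑ j, (xk j - x j) * ((bhat i - ∑ j', A i j' * xk j') * A i j)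
      ≤ 2 / Real.sqrt (S.card : ℝ) *
          (sigmaMax A ^ 2 / Real.sqrt ((m : ℝ) * (α * (1 - q) - β))) *
        ∑ j, (xk j - x j) ^ 2 := by
  have hnorm : ‖WithLp.toLp 2 (xk - x)‖ = √(∑ j, (xk j - x j) ^ 2) := by
    simp [EuclideanSpace.norm_eq]
  refine (cross_term_bound_general A x xk bhat hS hres).trans_eq ?_
  rw [← sigmaMax_eq_l2_opNorm, hnorm]
  linear_combination 2 / √(#S : ℝ) * (sigmaMax A ^ 2 / √((m : ℝ) * (α * (1 - q) - β))) *
    Real.sq_sqrt (sum_nonneg fun j _ ↦ sq_nonneg (xk j - x j))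
end

section
/- Let A ∈ ℝ^{m×n} (m ≥ n) be a full-rank matrix, x ∈ ℝ^n, b = Ax. Let (x_k) be the iterates of the randomized Kaczmarz method: x_{k+1} = x_k + ((b_i − ⟨x_k, a_i⟩)/‖a_i‖²) a_i where at each step the row index i is chosen at random with probability proportional to ‖a_i‖². Then for every k ≥ 0, 𝔼‖x_k − x‖² ≤ r^k ‖x_0 − x‖², where r = 1 − σ_min(A)²/‖A‖_F². -/
open Finset

/-- The smallest singular value of the row submatrix `A_S`:
`inf_{x ≠ 0} ‖A_S x‖ / ‖x‖`.  With `S = univ` this is the smallest singular value of `A`. -/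
noncomputable def sigmaMinSub {m n : ℕ} (A : Matrix (Fin m) (Fin n) ℝ)
    (S : Finset (Fin m)) : ℝ :=
  sInf {r : ℝ | ∃ x : Fin n → ℝ, x ≠ 0 ∧
    r = Real.sqrt (∑ i ∈ S, (∑ j, A i j * x j) ^ 2) / Real.sqrt (∑ j, (x j) ^ 2)}

/-- `rkExp A b x⋆ k v` is the expected squared error `𝔼‖x_k - x⋆‖²` of the randomized
Kaczmarz algorithm after `k` steps started at `x_0 = v`, where at each step the row index `i`
is chosen at random with probability `‖a_i‖²/‖A‖_F²` and
`x_{k+1} = x_k + ((b_i - ⟨x_k, a_i⟩)/‖a_i‖²) a_i`. -/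
noncomputable def rkExp {m n : ℕ} (A : Matrix (Fin m) (Fin n) ℝ) (b : Fin m → ℝ)
    (xstar : Fin n → ℝ) : ℕ → (Fin n → ℝ) → ℝ
  | 0, v => ∑ j, (v j - xstar j) ^ 2
  | k + 1, v =>
    ∑ i, ((∑ j, (A i j) ^ 2) / (∑ i', ∑ j, (A i' j) ^ 2)) *
      rkExp A b xstar k
        (fun j => v j + ((b i - ∑ j', A i j' * v j') / (∑ j', (A i j') ^ 2)) * A i j)

/-!
For a consistent system, one Kaczmarz step projects the error orthogonally onto the complement of
the chosen row `a i`, which removes `‖⟪a i, e⟫‖² / ‖a i‖²` from the squared error. Choosing row `i`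
with probability proportional to `‖a i‖²` cancels this denominator, so the expected loss is
`∑ i, ‖⟪a i, e⟫‖² / ∑ i, ‖a i‖²`, which the smallest singular value bounds below by a fixed fraction
of `‖e‖²`.
-/

section InnerProductSpace

variable {𝕜 E ι : Type*} [RCLike 𝕜] [NormedAddCommGroup E] [InnerProductSpace 𝕜 E]

open scoped InnerProductSpace

/-- One step of the Kaczmarz method for the equation `⟪a, x⟫ = β`: the orthogonal projection of `v`
onto its solution set. For `a = 0` the step does nothing. -/
noncomputable def kaczmarzStep (a : E) (β : 𝕜) (v : E) : E :=
  v + ((β - ⟪a, v⟫_𝕜) / ((‖a‖ ^ 2 : ℝ) : 𝕜)) • a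

theorem kaczmarzStep_inner_sub (a x v : E) :
    kaczmarzStep a ⟪a, x⟫_𝕜 v - x = (𝕜 ∙ a)ᗮ.starProjection (v - x) := by
  rw [Submodule.starProjection_orthogonal_val, Submodule.starProjection_singleton, kaczmarzStep,
    ← inner_sub_right, ← neg_sub v x, inner_neg_right, neg_div, neg_smul]
  abel

theorem norm_sq_mul_norm_starProjection_orthogonal_singleton_sq (a e : E) :
    ‖a‖ ^ 2 * ‖(𝕜 ∙ a)ᗮ.starProjection e‖ ^ 2 = ‖a‖ ^ 2 * ‖e‖ ^ 2 - ‖⟪a, e⟫_𝕜‖ ^ 2 := by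
  have projection_eq : ‖a‖ ^ 2 * ‖(𝕜 ∙ a).starProjection e‖ ^ 2 = ‖⟪a, e⟫_𝕜‖ ^ 2 := by
    obtain rfl | ha := eq_or_ne a 0
    · simp
    · have norm_a_ne_zero : ‖a‖ ≠ 0 := norm_ne_zero_iff.mpr ha
      rw [Submodule.starProjection_singleton, norm_smul, norm_div, RCLike.norm_ofReal,
        abs_of_nonneg (sq_nonneg ‖a‖)]
      field_simp
  rw [(𝕜 ∙ a).norm_sq_eq_add_norm_sq_starProjection e, mul_add, projection_eq,
    add_sub_cancel_left]

variable [Fintype ι]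

theorem sum_norm_inner_sq_le (a : ι → E) (e : E) :
    ∑ i, ‖⟪a i, e⟫_𝕜‖ ^ 2 ≤ (∑ i, ‖a i‖ ^ 2) * ‖e‖ ^ 2 := by
  rw [sum_mul]
  gcongr with i
  rw [← mul_pow]
  gcongr
  exact norm_inner_le_norm (a i) e

theorem le_sum_norm_sq_of_le_sum_norm_inner_sq [Nontrivial E] {a : ι → E} {c : ℝ}
    (hc : ∀ e, c * ‖e‖ ^ 2 ≤ ∑ i, ‖⟪a i, e⟫_𝕜‖ ^ 2) : c ≤ ∑ i, ‖a i‖ ^ 2 := by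
  obtain ⟨e, he⟩ := exists_ne (0 : E)
  exact le_of_mul_le_mul_right ((hc e).trans (sum_norm_inner_sq_le a e)) (by positivity)

/-- The probability with which the randomized Kaczmarz method chooses the `i`-th equation. All
weights are `0` when `a = 0`. -/
noncomputable def kaczmarzWeight (a : ι → E) (i : ι) : ℝ :=
  ‖a i‖ ^ 2 / ∑ j, ‖a j‖ ^ 2

theorem kaczmarzWeight_nonneg (a : ι → E) (i : ι) : 0 ≤ kaczmarzWeight a i := by
  unfold kaczmarzWeight
  positivity

/-- The expected squared distance to `x` after `k` steps of the randomized Kaczmarz method for the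
system `⟪a i, x⟫ = b i`, started at `v`. The recursion conditions on the first equation chosen. -/
noncomputable def kaczmarzExpectedSqError (a : ι → E) (b : ι → 𝕜) (x : E) : ℕ → E → ℝ
  | 0, v => ‖v - x‖ ^ 2
  | k + 1, v =>
    ∑ i, kaczmarzWeight a i * kaczmarzExpectedSqError a b x k (kaczmarzStep (a i) (b i) v)

theorem sum_norm_sq_pos {a : ι → E} (ha : a ≠ 0) : 0 < ∑ i, ‖a i‖ ^ 2 := by
  obtain ⟨i, hi⟩ := Function.ne_iff.mp ha
  exact sum_pos' (fun _ _ ↦ by positivity) ⟨i, mem_univ i, pow_pos (norm_pos_iff.mpr hi) 2⟩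

theorem sum_kaczmarzWeight_mul_norm_kaczmarzStep_sub_sq {a : ι → E} (ha : a ≠ 0) (x v : E) :
    ∑ i, kaczmarzWeight a i * ‖kaczmarzStep (a i) ⟪a i, x⟫_𝕜 v - x‖ ^ 2 =
      ‖v - x‖ ^ 2 - (∑ i, ‖⟪a i, v - x⟫_𝕜‖ ^ 2) / ∑ i, ‖a i‖ ^ 2 := by
  have sum_ne_zero : ∑ i, ‖a i‖ ^ 2 ≠ 0 := (sum_norm_sq_pos ha).ne'
  simp only [kaczmarzWeight, div_mul_eq_mul_div, kaczmarzStep_inner_sub,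
    norm_sq_mul_norm_starProjection_orthogonal_singleton_sq]
  rw [← sum_div, sum_sub_distrib, ← sum_mul]
  field_simp

theorem sum_kaczmarzWeight_mul_norm_kaczmarzStep_sub_sq_le {a : ι → E} (ha : a ≠ 0) {c : ℝ}
    (hc : ∀ e, c * ‖e‖ ^ 2 ≤ ∑ i, ‖⟪a i, e⟫_𝕜‖ ^ 2) (x v : E) :
    ∑ i, kaczmarzWeight a i * ‖kaczmarzStep (a i) ⟪a i, x⟫_𝕜 v - x‖ ^ 2 ≤
      (1 - c / ∑ i, ‖a i‖ ^ 2) * ‖v - x‖ ^ 2 := by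
  rw [sum_kaczmarzWeight_mul_norm_kaczmarzStep_sub_sq ha, sub_mul, one_mul, div_mul_eq_mul_div]
  gcongr
  exact hc (v - x)

theorem kaczmarzExpectedSqError_eq_zero [Subsingleton E] (a : ι → E) (b : ι → 𝕜) (x : E)
    (k : ℕ) (v : E) : kaczmarzExpectedSqError a b x k v = 0 := by
  induction k generalizing v with
  | zero => simp [kaczmarzExpectedSqError, Subsingleton.elim v x]
  | succ k ih => simp only [kaczmarzExpectedSqError, ih, mul_zero, sum_const_zero]

theorem randomized_kaczmarz_convergence_general {a : ι → E} (ha : Nontrivial E → a ≠ 0) {c : ℝ}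
    (hc : ∀ e, c * ‖e‖ ^ 2 ≤ ∑ i, ‖⟪a i, e⟫_𝕜‖ ^ 2) {b : ι → 𝕜} {x : E}
    (hb : ∀ i, b i = ⟪a i, x⟫_𝕜) (k : ℕ) (v : E) :
    kaczmarzExpectedSqError a b x k v ≤ (1 - c / ∑ i, ‖a i‖ ^ 2) ^ k * ‖v - x‖ ^ 2 := by
  obtain _ | _ := subsingleton_or_nontrivial E
  · simp [kaczmarzExpectedSqError_eq_zero, Subsingleton.elim v x]
  obtain rfl : b = fun i ↦ ⟪a i, x⟫_𝕜 := funext hb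
  set r := 1 - c / ∑ i, ‖a i‖ ^ 2
  have r_nonneg : 0 ≤ r :=
    sub_nonneg.mpr (div_le_one_of_le₀ (le_sum_norm_sq_of_le_sum_norm_inner_sq hc) (by positivity))
  induction k generalizing v with
  | zero => simp [kaczmarzExpectedSqError]
  | succ k ih =>
    calc ∑ i, kaczmarzWeight a i *
          kaczmarzExpectedSqError a _ x k (kaczmarzStep (a i) ⟪a i, x⟫_𝕜 v)
      _ ≤ ∑ i, kaczmarzWeight a i * (r ^ k * ‖kaczmarzStep (a i) ⟪a i, x⟫_𝕜 v - x‖ ^ 2) := by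
        gcongr with i
        · exact kaczmarzWeight_nonneg a i
        · exact ih _
      _ = r ^ k * ∑ i, kaczmarzWeight a i * ‖kaczmarzStep (a i) ⟪a i, x⟫_𝕜 v - x‖ ^ 2 := by
        simp only [mul_sum, mul_left_comm]
      _ ≤ r ^ k * (r * ‖v - x‖ ^ 2) := by
        gcongr
        exact sum_kaczmarzWeight_mul_norm_kaczmarzStep_sub_sq_le (ha ‹_›) hc x v
      _ = r ^ (k + 1) * ‖v - x‖ ^ 2 := by ring

end InnerProductSpace

section Matrix

variable {m n : ℕ}

open scoped RealInnerProductSpace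

/-- The rows of a real matrix as vectors of Euclidean space. -/
def euclideanRow (A : Matrix (Fin m) (Fin n) ℝ) (i : Fin m) : EuclideanSpace ℝ (Fin n) :=
  WithLp.toLp 2 (A i)

theorem inner_euclideanRow (A : Matrix (Fin m) (Fin n) ℝ) (i : Fin m)
    (e : EuclideanSpace ℝ (Fin n)) : ⟪euclideanRow A i, e⟫ = ∑ j, A i j * e j := by
  simp [euclideanRow, PiLp.inner_apply, mul_comm]

theorem norm_euclideanRow_sq (A : Matrix (Fin m) (Fin n) ℝ) (i : Fin m) :
    ‖euclideanRow A i‖ ^ 2 = ∑ j, A i j ^ 2 :=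
  EuclideanSpace.real_norm_sq_eq _

theorem euclideanRow_ne_zero {A : Matrix (Fin m) (Fin n) ℝ} (hA : A ≠ 0) : euclideanRow A ≠ 0 :=
  fun h ↦ hA <| Matrix.ext fun i j ↦ congrArg (· j) (congrFun h i)

theorem euclideanRow_ne_zero_of_rank_eq [Nontrivial (EuclideanSpace ℝ (Fin n))]
    {A : Matrix (Fin m) (Fin n) ℝ} (hrank : A.rank = n) : euclideanRow A ≠ 0 := by
  have rank_pos : 0 < A.rank := by
    rw [hrank, ← finrank_euclideanSpace_fin (𝕜 := ℝ) (n := n)]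
    exact Module.finrank_pos
  refine euclideanRow_ne_zero ?_
  rintro rfl
  exact rank_pos.ne' Matrix.rank_zero

theorem sigmaMinSub_nonneg (A : Matrix (Fin m) (Fin n) ℝ) (S : Finset (Fin m)) :
    0 ≤ sigmaMinSub A S := by
  refine Real.sInf_nonneg ?_
  rintro _ ⟨y, -, rfl⟩
  positivity

theorem sigmaMinSub_mul_norm_le (A : Matrix (Fin m) (Fin n) ℝ) (S : Finset (Fin m))
    (e : EuclideanSpace ℝ (Fin n)) :
    sigmaMinSub A S * ‖e‖ ≤ √(∑ i ∈ S, ⟪euclideanRow A i, e⟫ ^ 2) := by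
  obtain rfl | he := eq_or_ne e 0
  · simp
  rw [← le_div_iff₀ (norm_pos_iff.mpr he)]
  refine csInf_le ⟨0, ?_⟩ ⟨e.ofLp, by simpa using he, ?_⟩
  · rintro _ ⟨y, -, rfl⟩
    positivity
  · simp only [inner_euclideanRow, ← EuclideanSpace.real_norm_sq_eq, Real.sqrt_sq (norm_nonneg e)]

theorem sigmaMinSub_sq_mul_norm_sq_le (A : Matrix (Fin m) (Fin n) ℝ) (S : Finset (Fin m))
    (e : EuclideanSpace ℝ (Fin n)) :
    sigmaMinSub A S ^ 2 * ‖e‖ ^ 2 ≤ ∑ i ∈ S, ‖⟪euclideanRow A i, e⟫‖ ^ 2 := by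
  simp only [Real.norm_eq_abs, sq_abs]
  rw [← mul_pow, ← Real.sq_sqrt (sum_nonneg fun i _ ↦ sq_nonneg ⟪euclideanRow A i, e⟫)]
  exact pow_le_pow_left₀ (mul_nonneg (sigmaMinSub_nonneg A S) (norm_nonneg e))
    (sigmaMinSub_mul_norm_le A S e) 2

theorem rkExp_eq_kaczmarzExpectedSqError (A : Matrix (Fin m) (Fin n) ℝ) (b : Fin m → ℝ)
    (x : Fin n → ℝ) (k : ℕ) (v : Fin n → ℝ) :
    rkExp A b x k v =
      kaczmarzExpectedSqError (euclideanRow A) b (WithLp.toLp 2 x) k (WithLp.toLp 2 v) := by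
  induction k generalizing v with
  | zero => simp [rkExp, kaczmarzExpectedSqError, EuclideanSpace.real_norm_sq_eq]
  | succ k ih =>
    simp only [rkExp, kaczmarzExpectedSqError, kaczmarzWeight, kaczmarzStep, ih,
      norm_euclideanRow_sq, inner_euclideanRow]
    rfl

end Matrix

/-- **Randomized Kaczmarz convergence (Strohmer–Vershynin).**  If `A ∈ ℝ^{m×n}` (`m ≥ n`) is
full rank, `b = Ax`, then the randomized Kaczmarz iterates satisfy
`𝔼‖x_k - x‖² ≤ r^k ‖x_0 - x‖²` with `r = 1 - σ_min(A)²/‖A‖_F²`. -/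
theorem randomized_kaczmarz_convergence {m n : ℕ} (hmn : n ≤ m)
    (A : Matrix (Fin m) (Fin n) ℝ) (hrank : A.rank = n)
    (x : Fin n → ℝ) (b : Fin m → ℝ)
    (hb : ∀ i, b i = ∑ j, A i j * x j)
    (x0 : Fin n → ℝ) :
    ∀ k : ℕ, rkExp A b x k x0
      ≤ (1 - sigmaMinSub A Finset.univ ^ 2 / (∑ i, ∑ j, (A i j) ^ 2)) ^ k *
          ∑ j, (x0 j - x j) ^ 2 := by
  intro k
  simpa only [rkExp_eq_kaczmarzExpectedSqError, EuclideanSpace.real_norm_sq_eq, PiLp.sub_apply,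
    euclideanRow] using
    randomized_kaczmarz_convergence_general (fun _ ↦ euclideanRow_ne_zero_of_rank_eq hrank)
      (sigmaMinSub_sq_mul_norm_sq_le A univ) (x := WithLp.toLp 2 x)
      (fun i ↦ (hb i).trans (inner_euclideanRow A i _).symm) k (WithLp.toLp 2 x0)
end
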